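/- arXiv:1908.06745 — 3 statements merged into one kernel-verified Lean document; each statement's English description precedes it below -/
import Mathlib

section
/- Let r ≥ 2 and let m^{(i)}_j ≥ 1 be integers for i ∈ ℤ/r and j ∈ {1,…,r−1}. Consider the filtered-permutation quandle with components A_i = ∏_{j=1}^{r−1} ℤ/m^{(i)}_j, where x_i(j) is the standard generator of the j-th factor of A_i for j ∈ {1,…,r−1} (identified with its class in ℤ/r) and x_i(0) = 0. Then the structure group of this quandle is abelian (equivalently, isomorphic to ℤ^r) if and only if gcd(m^{(i)}_j, m^{(i+j)}_{r−j}) = 1 for all i ∈ ℤ/r and all j ∈ {1,…,r−1}, where the index i+j is taken modulo r. -/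
variable {X : Type*}

/-- The relators `g_a g_b (g_b g_{a ◁ b})⁻¹` of the structure group. -/
def structureRels (op : X → X → X) : Set (FreeGroup X) :=
  {w | ∃ a b : X,
    w = FreeGroup.of a * FreeGroup.of b * (FreeGroup.of b * FreeGroup.of (op a b))⁻¹}

/-- The structure group `⟨g_a, a ∈ X | g_a g_b = g_b g_{a ◁ b}⟩` of a quandle. -/
abbrev StructureGroup (op : X → X → X) : Type _ := PresentedGroup (structureRels op)

/-- The filtered-permutation (FP) quandle operation on `⊔_{i ∈ ℤ/r} A i`:
`a ◁ b = a + x i (j - i)` for `a ∈ A i`, `b ∈ A j`. -/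
def fpOp {r : ℕ} (A : ZMod r → Type*) [∀ i, AddCommGroup (A i)]
    (x : (i : ZMod r) → ZMod r → A i) :
    (Σ i, A i) → (Σ i, A i) → (Σ i, A i) :=
  fun a b => ⟨a.1, a.2 + x a.1 (b.1 - a.1)⟩

/-- The components `A i = ∏_{j=1}^{r-1} ℤ/m^{(i)}_j` (indexed by `Fin (r-1)`,
where the index `j : Fin (r-1)` stands for `j+1 ∈ {1,…,r-1}`). -/
abbrev stdA (r : ℕ) (m : ZMod r → Fin (r - 1) → ℕ) : ZMod r → Type :=
  fun i => (j : Fin (r - 1)) → ZMod (m i j)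

/-- `stdx r m i k` is the standard generator of the `k`-th factor of `A i` for
`k ≠ 0`, and `0` for `k = 0`. -/
def stdx (r : ℕ) [NeZero r] (m : ZMod r → Fin (r - 1) → ℕ) :
    (i : ZMod r) → ZMod r → stdA r m i := fun i k =>
  if h : k.val = 0 then 0
  else Pi.single (⟨k.val - 1, by have := ZMod.val_lt k; omega⟩ : Fin (r - 1)) 1

/-!
For an arbitrary family `x`, the element `g_a⁻¹ g_{a + x i (j - i)} = (g_{b + x j (i - j)})⁻¹ g_b`
of the structure group depends neither on `a ∈ A i` nor on `b ∈ A j`. Its order therefore divides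
the additive orders of both `x i (j - i)` and `x j (i - j)`, so it is trivial when these are
coprime. If conversely `d` divides both orders and the elements `x i k` of each component are
independent, then the structure group acts on `(ℤ/d)²` by Heisenberg-type shears, with the
components `A i` and `A j` acting as the two noncommuting generators.
-/

namespace StructureGroup

variable {op : X → X → X}

lemma of_mul_of (a b : X) :
    (PresentedGroup.of a : StructureGroup op) * PresentedGroup.of b =
      PresentedGroup.of b * PresentedGroup.of (op a b) :=
  PresentedGroup.mk_eq_mk_of_mul_inv_mem ⟨a, b, rfl⟩

lemma of_op_self (a : X) :
    (PresentedGroup.of (op a a) : StructureGroup op) = PresentedGroup.of a :=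
  (mul_left_cancel (of_mul_of a a)).symm

lemma lift_eq_one {G : Type*} [Group G] (f : X → G)
    (hf : ∀ a b, f a * f b = f b * f (op a b)) :
    ∀ w ∈ structureRels op, FreeGroup.lift f w = 1 := by
  rintro _ ⟨a, b, rfl⟩
  simp only [map_mul, map_inv, FreeGroup.lift_apply_of, mul_inv_eq_one, hf a b]

lemma mul_comm_of_commute_of
    (hcomm : ∀ a b : X, Commute (PresentedGroup.of a : StructureGroup op) (PresentedGroup.of b))
    (g h : StructureGroup op) : g * h = h * g := by
  have of_mem_center (a : X) :
      (PresentedGroup.of a : StructureGroup op) ∈ Subgroup.center (StructureGroup op) := by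
    refine Subgroup.mem_center_iff.mpr fun u => ?_
    have hu := PresentedGroup.generated_by _ (Subgroup.centralizer {PresentedGroup.of a})
      (fun b => Subgroup.mem_centralizer_singleton_iff.mpr (hcomm b a)) u
    exact Subgroup.mem_centralizer_singleton_iff.mp hu
  exact (Subgroup.mem_center_iff.mp (PresentedGroup.generated_by _ _ of_mem_center g) h).symm

end StructureGroup

section Coprime

variable {G A B : Type*} [Group G] [AddCommGroup A] [AddCommGroup B]

lemma orderOf_dvd_addOrderOf_of_map_add {g : A → G} {x : A} {c : G}
    (hg : ∀ a, g (a + x) = g a * c) : orderOf c ∣ addOrderOf x := by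
  have hsemi : Function.Semiconj g (· + x) (· * c) := hg
  refine orderOf_dvd_of_pow_eq_one ?_
  simpa [eq_comm] using (hsemi.iterate_right (addOrderOf x)) 0

lemma commute_of_coprime_addOrderOf {g : A → G} {g' : B → G} {x : A} {y : B}
    (hg : ∀ a b, g a * g' b = g' b * g (a + x)) (hg' : ∀ a b, g' b * g a = g a * g' (b + y))
    (hxy : (addOrderOf x).Coprime (addOrderOf y)) (a : A) (b : B) : Commute (g a) (g' b) := by
  have key (a : A) (b : B) : (g a)⁻¹ * g (a + x) = (g' (b + y))⁻¹ * g' b := by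
    rw [eq_inv_mul_of_mul_eq (hg a b).symm, eq_inv_mul_of_mul_eq (hg' a b).symm]
    group
  set c : G := (g 0)⁻¹ * g (0 + x) with hc
  have g_add (a : A) : g (a + x) = g a * c := by
    rw [hc, key 0 0, ← key a 0, mul_inv_cancel_left]
  have g'_add (b : B) : g' (b + y) = g' b * c⁻¹ := by
    rw [hc, key 0 b, mul_inv_rev, inv_inv, mul_inv_cancel_left]
  have c_eq_one : c = 1 := by
    have hdvd_y := orderOf_dvd_addOrderOf_of_map_add g'_add
    rw [orderOf_inv] at hdvd_y
    exact orderOf_eq_one_iff.mp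
      (Nat.eq_one_of_dvd_coprimes hxy (orderOf_dvd_addOrderOf_of_map_add g_add) hdvd_y)
  rw [Commute, SemiconjBy, hg, g_add, c_eq_one, mul_one]

end Coprime

section Heisenberg

variable {R : Type*} [CommRing R]

/-- The action on the plane `R × R` of the element with coordinates `p`, `q` and central
coordinate `z` of the Heisenberg group over `R`; it serves as a target for homomorphisms out of
structure groups. -/
def heisenbergPerm (p q z : R) : Equiv.Perm (R × R) where
  toFun s := (s.1 + p, s.2 + q * s.1 + z)
  invFun s := (s.1 - p, s.2 - q * (s.1 - p) - z)
  left_inv s := by ext <;> dsimp only <;> ring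
  right_inv s := by ext <;> dsimp only <;> ring

lemma heisenbergPerm_mul_eq_mul_iff {p q z p' q' z' w : R} :
    heisenbergPerm p q z * heisenbergPerm p' q' z' =
        heisenbergPerm p' q' z' * heisenbergPerm p q w ↔
      w = z + (q * p' - q' * p) := by
  constructor
  · intro h
    have hsnd : 0 + q' * 0 + z' + q * (0 + p') + z = 0 + q * 0 + w + q' * (0 + p) + z' :=
      congrArg Prod.snd (Equiv.congr_fun h (0, 0))
    linear_combination -hsnd
  · rintro rfl
    ext s <;> simp only [heisenbergPerm, Equiv.Perm.mul_apply, Equiv.coe_fn_mk] <;> ring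

end Heisenberg

section Coordinate

variable {A : Type*} [AddCommGroup A]

/- The coordinate need not extend to a homomorphism on all of `A`, so it is only defined relative
to a set of representatives for the subgroup generated by `N` and `u`. -/
lemma exists_coordinate_of_zsmul_mem (N : AddSubgroup A) (u : A) {d : ℕ}
    (hd : ∀ n : ℤ, n • u ∈ N → (d : ℤ) ∣ n) :
    ∃ z : A → ZMod d, ∀ (a b : A) (n : ℤ), b - a - n • u ∈ N → z b = z a + n := by
  let K := N ⊔ AddSubgroup.zmultiples u
  let rep (a : A) : A := (a : A ⧸ K).out
  have exists_coeff (a : A) : ∃ n : ℤ, a - rep a - n • u ∈ N := by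
    have hmem : a - rep a ∈ K :=
      (QuotientAddGroup.eq_iff_sub_mem).mp (QuotientAddGroup.out_eq' _).symm
    obtain ⟨s, hs, _, ⟨n, rfl⟩, hsum⟩ := AddSubgroup.mem_sup.mp hmem
    exact ⟨n, by simpa [← hsum] using hs⟩
  choose coeff hcoeff using exists_coeff
  refine ⟨fun a => coeff a, fun a b n hab => ?_⟩
  have rep_eq : rep b = rep a := by
    refine congrArg Quotient.out (QuotientAddGroup.eq_iff_sub_mem.mpr ?_)
    exact AddSubgroup.mem_sup.mpr ⟨_, hab, _, ⟨n, rfl⟩, sub_add_cancel _ _⟩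
  have hmem : (coeff b - (coeff a + n)) • u ∈ N := by
    have := N.sub_mem (N.add_mem hab (hcoeff a)) (hcoeff b)
    rw [rep_eq] at this
    convert this using 1
    module
  have := (ZMod.intCast_eq_intCast_iff_dvd_sub _ _ d).mpr (hd _ hmem)
  simpa using this.symm

lemma exists_coordinate_of_iSupIndep {ι : Type*} [DecidableEq ι] {v : ι → A}
    (hv : iSupIndep fun k => AddSubgroup.zmultiples (v k)) (k : ι) {d : ℕ}
    (hd : d ∣ addOrderOf (v k)) :
    ∃ z : A → ZMod d, ∀ a l, z (a + v l) = z a + if l = k then 1 else 0 := by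
  let N := ⨆ l, ⨆ _ : l ≠ k, AddSubgroup.zmultiples (v l)
  have dvd_of_mem (n : ℤ) (hn : n • v k ∈ N) : (d : ℤ) ∣ n := by
    have hzero : n • v k = 0 := AddSubgroup.disjoint_def.mp (hv k) ⟨n, rfl⟩ hn
    exact (Int.natCast_dvd_natCast.mpr hd).trans (addOrderOf_dvd_iff_zsmul_eq_zero.mpr hzero)
  obtain ⟨z, hz⟩ := exists_coordinate_of_zsmul_mem N (v k) dvd_of_mem
  refine ⟨z, fun a l => ?_⟩
  split_ifs with hl
  · simpa using hz a (a + v l) 1 (by simp [hl])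
  · have hmem : v l ∈ N :=
      AddSubgroup.mem_iSup_of_mem l
        (AddSubgroup.mem_iSup_of_mem hl (AddSubgroup.mem_zmultiples _))
    simpa using hz a (a + v l) 0 (by simpa using hmem)

end Coordinate

section FilteredPermutation

variable {r : ℕ} {A : ZMod r → Type*} [∀ i, AddCommGroup (A i)] {x : (i : ZMod r) → ZMod r → A i}

lemma structureGroup_comm_of_coprime_addOrderOf
    (hx : ∀ i j, i ≠ j → (addOrderOf (x i (j - i))).Coprime (addOrderOf (x j (i - j))))
    (g h : StructureGroup (fpOp A x)) : g * h = h * g := by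
  refine StructureGroup.mul_comm_of_commute_of ?_ g h
  rintro ⟨i, a⟩ ⟨j, b⟩
  obtain rfl | hij := eq_or_ne i j
  · -- `a ◁ b` only depends on the component of `b`, so here it is `a ◁ a`.
    have h_op : (PresentedGroup.of (fpOp A x ⟨i, a⟩ ⟨i, b⟩) : StructureGroup (fpOp A x)) =
        PresentedGroup.of ⟨i, a⟩ := StructureGroup.of_op_self (op := fpOp A x) ⟨i, a⟩
    exact (StructureGroup.of_mul_of _ _).trans (congrArg _ h_op)
  · exact commute_of_coprime_addOrderOf
      (g := fun a => (PresentedGroup.of ⟨i, a⟩ : StructureGroup (fpOp A x)))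
      (g' := fun b => PresentedGroup.of ⟨j, b⟩)
      (fun _ _ => StructureGroup.of_mul_of _ _) (fun _ _ => StructureGroup.of_mul_of _ _)
      (hx i j hij) a b

/- `z` is the central coordinate of a homomorphism to the Heisenberg group over `R` that sends the
generators in `A i` to elements with noncentral coordinates `p i` and `q i`. -/
lemma mul_eq_mul_of_structureGroup_comm {R : Type*} [CommRing R] {p q : ZMod r → R}
    {z : (i : ZMod r) → A i → R}
    (hz : ∀ i j a, z i (a + x i (j - i)) = z i a + (q i * p j - q j * p i))
    (hcomm : ∀ g h : StructureGroup (fpOp A x), g * h = h * g) (i j : ZMod r) :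
    q i * p j = q j * p i := by
  let f (a : Σ i, A i) : Equiv.Perm (R × R) := heisenbergPerm (p a.1) (q a.1) (z a.1 a.2)
  have hf (a b : Σ i, A i) : f a * f b = f b * f (fpOp A x a b) :=
    heisenbergPerm_mul_eq_mul_iff.mpr (hz a.1 b.1 a.2)
  let F := PresentedGroup.toGroup (StructureGroup.lift_eq_one f hf)
  have f_comm : f ⟨i, 0⟩ * f ⟨j, 0⟩ = f ⟨j, 0⟩ * f ⟨i, 0⟩ := by
    simpa [F] using congrArg F (hcomm (PresentedGroup.of ⟨i, 0⟩) (PresentedGroup.of ⟨j, 0⟩))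
  exact sub_eq_zero.mp (left_eq_add.mp (heisenbergPerm_mul_eq_mul_iff.mp f_comm))

lemma exists_centralCoordinate (hx : ∀ i, iSupIndep fun k => AddSubgroup.zmultiples (x i k))
    {i j : ZMod r} (hij : i ≠ j) {d : ℕ} (hi : d ∣ addOrderOf (x i (j - i)))
    (hj : d ∣ addOrderOf (x j (i - j))) (k : ZMod r) :
    ∃ z : A k → ZMod d, ∀ l a, z (a + x k (l - k)) =
      z a + ((Pi.single j 1 : ZMod r → ZMod d) k * (Pi.single i 1 : ZMod r → ZMod d) l -
        (Pi.single j 1 : ZMod r → ZMod d) l * (Pi.single i 1 : ZMod r → ZMod d) k) := by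
  by_cases hki : k = i
  · subst hki
    obtain ⟨z, hz⟩ := exists_coordinate_of_iSupIndep (hx k) (j - k) hi
    exact ⟨fun a => -z a, fun l a => by simp [hz, Pi.single_apply, hij, add_comm]⟩
  by_cases hkj : k = j
  · subst hkj
    obtain ⟨z, hz⟩ := exists_coordinate_of_iSupIndep (hx k) (i - k) hj
    exact ⟨z, fun l a => by simp [hz, Pi.single_apply, hki]⟩
  · exact ⟨0, fun l a => by simp [hki, hkj]⟩

lemma coprime_addOrderOf_of_structureGroup_comm
    (hx : ∀ i, iSupIndep fun k => AddSubgroup.zmultiples (x i k))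
    (hcomm : ∀ g h : StructureGroup (fpOp A x), g * h = h * g) {i j : ZMod r} (hij : i ≠ j) :
    (addOrderOf (x i (j - i))).Coprime (addOrderOf (x j (i - j))) := by
  choose z hz using exists_centralCoordinate hx hij (Nat.gcd_dvd_left _ _) (Nat.gcd_dvd_right _ _)
  have h := mul_eq_mul_of_structureGroup_comm (fun k l a => hz k l a) hcomm i j
  exact ZMod.one_eq_zero_iff.mp (by simpa [hij, hij.symm] using h.symm)

-- An element of infinite order has `addOrderOf` zero, and `0` is coprime only to `1`.
theorem structureGroup_abelian_iff_gcd_general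
    (hx : ∀ i, iSupIndep fun k => AddSubgroup.zmultiples (x i k)) :
    (∀ g h : StructureGroup (fpOp A x), g * h = h * g) ↔
      ∀ i j, i ≠ j → (addOrderOf (x i (j - i))).Coprime (addOrderOf (x j (i - j))) :=
  ⟨fun hcomm _ _ => coprime_addOrderOf_of_structureGroup_comm hx hcomm,
    structureGroup_comm_of_coprime_addOrderOf⟩

end FilteredPermutation

section StandardGenerators

variable {r : ℕ}

lemma ne_zero_iff_exists_natCast_succ [NeZero r] {k : ZMod r} :
    k ≠ 0 ↔ ∃ j : Fin (r - 1), k = ((j.val + 1 : ℕ) : ZMod r) := by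
  constructor
  · intro hk
    have hpos : k.val ≠ 0 := (ZMod.val_ne_zero k).mpr hk
    have hlt := ZMod.val_lt k
    refine ⟨⟨k.val - 1, by omega⟩, ?_⟩
    rw [Nat.sub_add_cancel (by omega), ZMod.natCast_zmod_val]
  · rintro ⟨j, rfl⟩ h
    have := Nat.le_of_dvd j.val.succ_pos ((ZMod.natCast_eq_zero_iff _ _).mp h)
    omega

lemma natCast_sub_add_two_succ (j : Fin (r - 1)) :
    ((r - (j.val + 2) + 1 : ℕ) : ZMod r) = -((j.val + 1 : ℕ) : ZMod r) := by
  rw [eq_neg_iff_add_eq_zero, ← Nat.cast_add]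
  have : r - (j.val + 2) + 1 + (j.val + 1) = r := by omega
  rw [this, ZMod.natCast_self]

variable [NeZero r] (m : ZMod r → Fin (r - 1) → ℕ) (i : ZMod r)

lemma stdx_zero : stdx r m i 0 = 0 := dif_pos ZMod.val_zero

lemma stdx_natCast_succ (j : Fin (r - 1)) :
    stdx r m i ((j.val + 1 : ℕ) : ZMod r) = Pi.single j 1 := by
  have hval : ((j.val + 1 : ℕ) : ZMod r).val = j.val + 1 := ZMod.val_cast_of_lt (by omega)
  have hindex (h : ((j.val + 1 : ℕ) : ZMod r).val - 1 < r - 1) : (⟨_, h⟩ : Fin (r - 1)) = j :=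
    Fin.ext (by simp only [hval, Nat.add_sub_cancel])
  rw [stdx, dif_neg (by rw [hval]; exact j.val.succ_ne_zero), hindex]

lemma addOrderOf_stdx_natCast_succ (j : Fin (r - 1)) :
    addOrderOf (stdx r m i ((j.val + 1 : ℕ) : ZMod r)) = m i j := by
  rw [stdx_natCast_succ]
  exact (addOrderOf_injective (AddMonoidHom.single (fun j => ZMod (m i j)) j)
    (Pi.single_injective (M := fun j => ZMod (m i j)) j) 1).trans (ZMod.addOrderOf_one (m i j))

lemma addOrderOf_stdx_neg_natCast_succ (j : Fin (r - 1)) :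
    addOrderOf (stdx r m i (-((j.val + 1 : ℕ) : ZMod r))) =
      m i ⟨r - (j.val + 2), by omega⟩ := by
  rw [← natCast_sub_add_two_succ]
  exact addOrderOf_stdx_natCast_succ m i ⟨r - (j.val + 2), by omega⟩

lemma stdx_apply_eq_zero {k : ZMod r} {j : Fin (r - 1)} (hk : k ≠ ((j.val + 1 : ℕ) : ZMod r)) :
    stdx r m i k j = 0 := by
  obtain rfl | hk0 := eq_or_ne k 0
  · rw [stdx_zero, Pi.zero_apply]
  · obtain ⟨j', rfl⟩ := ne_zero_iff_exists_natCast_succ.mp hk0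
    rw [stdx_natCast_succ]
    exact Pi.single_eq_of_ne (fun h => hk (by rw [h])) _

lemma iSupIndep_zmultiples_stdx :
    iSupIndep fun k => AddSubgroup.zmultiples (stdx r m i k) := by
  intro k
  obtain rfl | hk := eq_or_ne k 0
  · simp only [stdx_zero, AddSubgroup.zmultiples_zero_eq_bot, disjoint_bot_left]
  obtain ⟨j, rfl⟩ := ne_zero_iff_exists_natCast_succ.mp hk
  have others_le_ker : ⨆ l, ⨆ _ : l ≠ ((j.val + 1 : ℕ) : ZMod r),
      AddSubgroup.zmultiples (stdx r m i l) ≤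
        (Pi.evalAddMonoidHom (fun j => ZMod (m i j)) j).ker :=
    iSup₂_le fun l hl => AddSubgroup.zmultiples_le_of_mem (stdx_apply_eq_zero m i hl)
  refine AddSubgroup.disjoint_def.mpr ?_
  rintro _ ⟨n, rfl⟩ hn
  have hcoord : (n • stdx r m i ((j.val + 1 : ℕ) : ZMod r)) j = 0 := others_le_ker hn
  simp only [stdx_natCast_succ, ← Pi.single_smul, Pi.single_eq_same] at hcoord ⊢
  rw [hcoord, Pi.single_zero]

lemma coprime_addOrderOf_stdx_iff :
    (∀ i k, i ≠ k → (addOrderOf (stdx r m i (k - i))).Coprime (addOrderOf (stdx r m k (i - k)))) ↔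
      ∀ i (j : Fin (r - 1)),
        (m i j).Coprime (m (i + ((j.val + 1 : ℕ) : ZMod r)) ⟨r - (j.val + 2), by omega⟩) := by
  constructor
  · intro h i j
    have hne : ((j.val + 1 : ℕ) : ZMod r) ≠ 0 := ne_zero_iff_exists_natCast_succ.mpr ⟨j, rfl⟩
    have hcop := h i (i + ((j.val + 1 : ℕ) : ZMod r)) (by simpa only [ne_eq, left_eq_add] using hne)
    rwa [add_sub_cancel_left, sub_add_cancel_left, addOrderOf_stdx_natCast_succ,
      addOrderOf_stdx_neg_natCast_succ] at hcop
  · intro h i k hik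
    obtain ⟨j, hj⟩ := ne_zero_iff_exists_natCast_succ.mp (sub_ne_zero.mpr hik.symm)
    obtain rfl : k = i + ((j.val + 1 : ℕ) : ZMod r) := eq_add_of_sub_eq' hj
    rw [add_sub_cancel_left, sub_add_cancel_left, addOrderOf_stdx_natCast_succ,
      addOrderOf_stdx_neg_natCast_succ]
    exact h i j

end StandardGenerators

/-- For the FP quandle on the components `A i = ∏_{j=1}^{r-1} ℤ/m^{(i)}_j`
with standard generators, the structure group is abelian iff
`gcd (m^{(i)}_j, m^{(i+j)}_{r-j}) = 1` for all `i ∈ ℤ/r` and `j ∈ {1,…,r-1}`. -/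
theorem structureGroup_abelian_iff_gcd (r : ℕ) [NeZero r] (hr : 2 ≤ r)
    (m : ZMod r → Fin (r - 1) → ℕ) (hm : ∀ i j, 1 ≤ m i j) :
    (∀ g h : StructureGroup (fpOp (stdA r m) (stdx r m)), g * h = h * g) ↔
      ∀ (i : ZMod r) (j : Fin (r - 1)),
        Nat.gcd (m i j)
          (m (i + ((j.val + 1 : ℕ) : ZMod r)) ⟨r - (j.val + 2), by omega⟩) = 1 :=
  (structureGroup_abelian_iff_gcd_general (iSupIndep_zmultiples_stdx m)).trans
    (coprime_addOrderOf_stdx_iff m)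
end

section
/- Let (X,◁) be a finite quandle with r orbits whose structure group G(X,◁) is abelian. Then the second rack homology group of (X,◁) is torsion-free: H_2(X,◁) ≅ ℤ^{r²}. -/
variable {X : Type*}

/-- Quandle axioms for a binary operation `op` (right-translation convention):
self-distributivity, bijectivity of right translations, idempotence. -/
structure IsQuandleOp (op : X → X → X) : Prop where
  sd : ∀ a b c, op (op a b) c = op (op a c) (op b c)
  bij : ∀ b, Function.Bijective fun a => op a b
  idem : ∀ a, op a a = a

/-- A quandle operation is abelian if `(a ◁ b) ◁ c = (a ◁ c) ◁ b`. -/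
def IsAbelianOp (op : X → X → X) : Prop :=
  ∀ a b c, op (op a b) c = op (op a c) b

/-- The smallest equivalence relation identifying `a` with `op a b`. -/
def orbitRel (op : X → X → X) : X → X → Prop :=
  Relation.EqvGen fun a b => ∃ c, op a c = b

/-- The setoid of orbits of a quandle. -/
def orbitSetoid (op : X → X → X) : Setoid X :=
  ⟨orbitRel op, Relation.EqvGen.is_equivalence _⟩

/-- The second rack differential `d₂(a,b) = (a◁b) - (a)`. -/
def d2 (op : X → X → X) : FreeAbelianGroup (X × X) →+ FreeAbelianGroup X :=
  FreeAbelianGroup.lift fun p =>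
    FreeAbelianGroup.of (op p.1 p.2) - FreeAbelianGroup.of p.1

/-- The third rack differential
`d₃(a,b,c) = (a◁b,c) - (a,c) - (a◁c, b◁c) + (a,b)`. -/
def d3 (op : X → X → X) : FreeAbelianGroup (X × X × X) →+ FreeAbelianGroup (X × X) :=
  FreeAbelianGroup.lift fun t =>
    FreeAbelianGroup.of (op t.1 t.2.1, t.2.2) - FreeAbelianGroup.of (t.1, t.2.2)
      - FreeAbelianGroup.of (op t.1 t.2.2, op t.2.1 t.2.2)
      + FreeAbelianGroup.of (t.1, t.2.1)

/-- The second rack homology group `H₂ = ker d₂ / im d₃`. -/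
abbrev H2 (op : X → X → X) : Type _ :=
  ↥((d2 op).ker) ⧸ ((d3 op).range.addSubgroupOf (d2 op).ker)

/-!
A cocycle `f : X × X → Q` lets the right translations of the rack act on `X × Q` by
`(x, t) ↦ (x ◁ b, t + f x b)`. These permutations satisfy the relations of the structure group, so
when that group is abelian they commute, and the one attached to `b` depends only on the orbit
of `b`. Together with the translations of `Q` they generate an abelian group `A` acting on
`X × Q`.

The pair `(a, b)` is then an arrow of the action groupoid from `(a, 0)` to `(a ◁ b, 0)`, given by
the translation attached to `b` corrected by `-f a b`. Around a cycle, the displacement accumulated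
in each `A`-orbit fixes the points of that orbit. If moreover every pair of orbits occurs with total
multiplicity zero, the translations cancel and only a shift by a value of `-f` remains; as `Q` acts
freely, that value is zero. For the universal cocycle, with values in `C₂ / im d₃`, this shows that
counting pairs of orbits embeds `H₂` into the free abelian group on these pairs.

A point of period `n` under `· ◁ b` gives a cycle whose count is `n` times a basis vector. The image
thus contains a nonzero multiple of every basis vector, and a triangular basis identifies it with
the whole free group.
-/

/-- A rack operation, in the convention of `IsQuandleOp`: a quandle operation without the
idempotence axiom. -/
structure IsRackOp (op : X → X → X) : Prop where
  sd : ∀ a b c, op (op a b) c = op (op a c) (op b c)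
  bij : ∀ b, Function.Bijective fun a => op a b

theorem IsQuandleOp.isRackOp {op : X → X → X} (hq : IsQuandleOp op) : IsRackOp op :=
  ⟨hq.sd, hq.bij⟩

namespace RackHomology

section TriangularBasis

theorem exists_last_ne_zero {ι M : Type*} [LinearOrder ι] [Zero M] {x : ι →₀ M} (hx : x ≠ 0) :
    ∃ i, x i ≠ 0 ∧ ∀ j, i < j → x j = 0 := by
  have hsupp := Finsupp.support_nonempty_iff.mpr hx
  refine ⟨_, Finsupp.mem_support_iff.mp (x.support.max'_mem hsupp), fun j hj => ?_⟩
  by_contra hne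
  exact hj.not_ge (x.support.le_max' j (Finsupp.mem_support_iff.mpr hne))

theorem linearIndependent_of_triangular {ι R : Type*} [LinearOrder ι] [Ring R] [NoZeroDivisors R]
    {u : ι → ι →₀ R} (hu : ∀ i j, i < j → u i j = 0) (hdiag : ∀ i, u i i ≠ 0) :
    LinearIndependent R u := by
  rw [linearIndependent_iff]
  intro l hl
  by_contra hne
  obtain ⟨m, hm, hlast⟩ := exists_last_ne_zero hne
  have hcoeff : Finsupp.linearCombination R u l m = l m * u m m := by
    rw [Finsupp.linearCombination_apply, Finsupp.sum, Finsupp.finsetSum_apply]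
    refine Finset.sum_eq_single_of_mem m (Finsupp.mem_support_iff.mpr hm) fun i hi him => ?_
    rcases him.lt_or_gt with him | hmi
    · rw [Finsupp.smul_apply, hu i m him, smul_zero]
    · exact absurd (hlast i hmi) (Finsupp.mem_support_iff.mp hi)
  rw [hl, Finsupp.zero_apply, eq_comm, mul_eq_zero] at hcoeff
  exact hcoeff.elim hm (hdiag m)

theorem le_span_range_of_triangular {ι R : Type*} [LinearOrder ι] [WellFoundedLT ι] [Ring R]
    {N : Submodule R (ι →₀ R)} {u : ι → ι →₀ R} (huN : ∀ i, u i ∈ N)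
    (hu : ∀ i j, i < j → u i j = 0)
    (hlead : ∀ i, ∀ x ∈ N, (∀ j, i < j → x j = 0) → ∃ c, x i = c * u i i) :
    N ≤ Submodule.span R (Set.range u) := by
  have mem_span (i : ι) :
      ∀ x ∈ N, (∀ j, i < j → x j = 0) → x ∈ Submodule.span R (Set.range u) := by
    induction i using WellFoundedLT.induction with
    | ind i ih =>
      intro x hxN hx
      obtain ⟨c, hc⟩ := hlead i x hxN hx
      have hcu : c • u i ∈ Submodule.span R (Set.range u) :=
        Submodule.smul_mem _ c (Submodule.subset_span ⟨i, rfl⟩)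
      rw [← sub_add_cancel x (c • u i)]
      refine add_mem ?_ hcu
      by_cases hzero : x - c • u i = 0
      · rw [hzero]
        exact zero_mem _
      obtain ⟨k, hk, hlast⟩ := exists_last_ne_zero hzero
      have hki : k < i := by
        by_contra! hik
        rcases hik.eq_or_lt with rfl | hik
        · simp [hc] at hk
        · simp [hx k hik, hu i k hik] at hk
      exact ih k hki _ (sub_mem hxN (Submodule.smul_mem _ c (huN i))) hlast
  intro x hxN
  by_cases hzero : x = 0
  · rw [hzero]
    exact zero_mem _
  obtain ⟨i, -, hlast⟩ := exists_last_ne_zero hzero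
  exact mem_span i x hxN hlast

/-- The ideal of `i`-th coordinates of those elements of `N` whose coordinates beyond `i` vanish;
its generators are the diagonal entries of a triangular basis of `N`. -/
noncomputable def leadingIdeal {ι R : Type*} [LinearOrder ι] [CommRing R]
    (N : Submodule R (ι →₀ R)) (i : ι) : Ideal R :=
  (N ⊓ Finsupp.supported R R (Set.Iic i)).map (Finsupp.lapply i)

theorem mem_leadingIdeal {ι R : Type*} [LinearOrder ι] [CommRing R] {N : Submodule R (ι →₀ R)}
    {i : ι} {r : R} :
    r ∈ leadingIdeal N i ↔ ∃ x ∈ N, (∀ j, i < j → x j = 0) ∧ x i = r := by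
  simp [leadingIdeal, Finsupp.mem_supported', and_assoc]

theorem nonempty_linearEquiv_finsupp_of_single_mem {ι R : Type*} [CommRing R] [IsDomain R]
    [IsPrincipalIdealRing R] (N : Submodule R (ι →₀ R))
    (hN : ∀ i, ∃ r : R, r ≠ 0 ∧ Finsupp.single i r ∈ N) :
    Nonempty (N ≃ₗ[R] (ι →₀ R)) := by
  obtain ⟨_, _⟩ := exists_wellFoundedLT ι
  choose u huN hu hdiag using fun i =>
    mem_leadingIdeal.mp (Submodule.IsPrincipal.generator_mem (leadingIdeal N i))
  have hdiag_ne (i : ι) : u i i ≠ 0 := by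
    obtain ⟨r, hr, hrN⟩ := hN i
    rw [hdiag, Ne, ← Submodule.IsPrincipal.eq_bot_iff_generator_eq_zero]
    have hr_mem : r ∈ leadingIdeal N i := mem_leadingIdeal.mpr
      ⟨_, hrN, fun j hj => Finsupp.single_eq_of_ne hj.ne', Finsupp.single_eq_same⟩
    exact (Submodule.ne_bot_iff _).mpr ⟨r, hr_mem, hr⟩
  have hlead (i : ι) (x : ι →₀ R) (hxN : x ∈ N) (hx : ∀ j, i < j → x j = 0) :
      ∃ c, x i = c * u i i := by
    rw [hdiag]
    exact (Submodule.IsPrincipal.mem_iff_eq_smul_generator _).mp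
      (mem_leadingIdeal.mpr ⟨x, hxN, hx, rfl⟩)
  have hspan : Submodule.span R (Set.range u) = N :=
    (Submodule.span_le.mpr (Set.range_subset_iff.mpr huN)).antisymm
      (le_span_range_of_triangular huN hu hlead)
  exact ⟨((linearIndependent_of_triangular hu hdiag_ne).linearCombinationEquiv.trans
    (LinearEquiv.ofEq _ _ hspan)).symm⟩

end TriangularBasis

section ActionGroupoid

variable {A Y : Type*} [AddCommGroup A] [AddAction A Y]

/-- The boundary of a 1-chain on the action groupoid of `A` on `Y`; the pair `(a, y)` is the arrow
from `y` to `a +ᵥ y`. -/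
def actionBoundary : FreeAbelianGroup (A × Y) →+ FreeAbelianGroup Y :=
  FreeAbelianGroup.lift fun e => FreeAbelianGroup.of (e.1 +ᵥ e.2) - FreeAbelianGroup.of e.2

/-- The total displacement of a 1-chain on the action groupoid of `A` on `Y`, computed separately on
each orbit. -/
noncomputable def orbitDisplacement :
    FreeAbelianGroup (A × Y) →+ (AddAction.orbitRel.Quotient A Y →₀ A) :=
  FreeAbelianGroup.lift fun e => Finsupp.single (Quotient.mk'' e.2) e.1

theorem orbitDisplacement_mem_stabilizer {z : FreeAbelianGroup (A × Y)}
    (hz : actionBoundary z = 0) (y : Y) :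
    orbitDisplacement z (Quotient.mk'' y) ∈ AddAction.stabilizer A y := by
  have exists_position (y' : Y)
      (hy' : (Quotient.mk'' y' : AddAction.orbitRel.Quotient A Y) = Quotient.mk'' y) :
      ∃ a : A, a +ᵥ y = y' :=
    Quotient.exact hy'
  classical
  choose! position hposition using exists_position
  let potential : FreeAbelianGroup Y →+ (AddAction.orbitRel.Quotient A Y →₀ A) :=
    FreeAbelianGroup.lift fun y' => Finsupp.single (Quotient.mk'' y') (position y')
  suffices ∀ z : FreeAbelianGroup (A × Y),
      (orbitDisplacement z - potential (actionBoundary z)) (Quotient.mk'' y) ∈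
        AddAction.stabilizer A y by
    simpa [hz] using this z
  intro z
  induction z using FreeAbelianGroup.induction_on with
  | zero => simp
  | neg e he =>
    rw [map_neg, map_neg, map_neg, ← neg_sub', Finsupp.neg_apply]
    exact neg_mem he
  | add z₁ z₂ h₁ h₂ =>
    rw [map_add, map_add, map_add, add_sub_add_comm, Finsupp.add_apply]
    exact add_mem h₁ h₂
  | of e =>
    obtain ⟨a, x⟩ := e
    have hax : (Quotient.mk'' (a +ᵥ x) : AddAction.orbitRel.Quotient A Y) = Quotient.mk'' x :=
      Quotient.sound ⟨a, rfl⟩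
    simp only [orbitDisplacement, potential, actionBoundary, FreeAbelianGroup.lift_apply_of,
      map_sub, hax, ← Finsupp.single_sub, Finsupp.single_apply]
    split_ifs with hxy
    · rw [AddAction.mem_stabilizer_iff,
        show a - (position (a +ᵥ x) - position x) = -position (a +ᵥ x) + (a + position x) by abel,
        add_vadd, add_vadd, hposition x hxy, neg_vadd_eq_iff, hposition _ (hax.trans hxy)]
    · exact zero_mem _

end ActionGroupoid

section Orbits

/-- The orbit of an element under `op`. -/
def orbitOf (op : X → X → X) (x : X) : Quotient (orbitSetoid op) := Quotient.mk _ x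

theorem orbitOf_op (op : X → X → X) (a b : X) : orbitOf op (op a b) = orbitOf op a :=
  Quotient.sound (.symm _ _ (.rel _ _ ⟨b, rfl⟩))

theorem apply_eq_of_orbitRel {op : X → X → X} {T : Type*} {φ : X → T}
    (hφ : ∀ a b, φ (op a b) = φ a) {x y : X} (h : orbitRel op x y) : φ x = φ y :=
  Setoid.eqvGen_le (s := Setoid.ker φ) (by rintro a _ ⟨b, rfl⟩; exact (hφ a b).symm) h

/-- The homomorphism `C₂ → ℤ^{(O × O)}`, where `O` is the set of orbits, sending `(a, b)` to the
basis vector at the pair of orbits of `a` and `b`. -/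
noncomputable def orbitPairCount (op : X → X → X) : FreeAbelianGroup (X × X) →+
    (Quotient (orbitSetoid op) × Quotient (orbitSetoid op) →₀ ℤ) :=
  FreeAbelianGroup.lift fun p => Finsupp.single (orbitOf op p.1, orbitOf op p.2) 1

theorem orbitPairCount_comp_d3 (op : X → X → X) : (orbitPairCount op).comp (d3 op) = 0 := by
  ext t : 1
  simp [orbitPairCount, d3, orbitOf_op]

theorem lift_eq_zero_of_orbitPairCount_eq_zero {op : X → X → X} {M : Type*} [AddCommGroup M]
    {φ : X → X → M} (hleft : ∀ a b c, φ (op a c) b = φ a b) (hright : ∀ a b c, φ a (op b c) = φ a b)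
    {z : FreeAbelianGroup (X × X)} (hz : orbitPairCount op z = 0) :
    FreeAbelianGroup.lift (fun p : X × X => φ p.1 p.2) z = 0 := by
  let φ' (k : Quotient (orbitSetoid op) × Quotient (orbitSetoid op)) : M :=
    Quotient.lift₂ φ (fun a b a' b' ha hb =>
      (apply_eq_of_orbitRel (φ := (φ · b)) (hleft · b) ha).trans
        (apply_eq_of_orbitRel (hright a') hb)) k.1 k.2
  have hfactor : FreeAbelianGroup.lift (fun p : X × X => φ p.1 p.2) =
      (Finsupp.liftAddHom fun k => zmultiplesHom M (φ' k)).comp (orbitPairCount op) := by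
    ext p : 1
    simp [orbitPairCount, φ', orbitOf]
  rw [hfactor, AddMonoidHom.comp_apply, hz, map_zero]

end Orbits

section Cocycles

variable {op : X → X → X} {Q : Type*} [AddCommGroup Q] {f : X → X → Q}

theorem commute_of_structureGroup_comm {H : Type*} [Group H]
    (hcomm : ∀ g h : StructureGroup op, g * h = h * g) {φ : X → H}
    (hφ : ∀ a b, φ a * φ b = φ b * φ (op a b)) (a b : X) : Commute (φ a) (φ b) := by
  have hrels : ∀ w ∈ structureRels op, FreeGroup.lift φ w = 1 := by
    rintro _ ⟨a, b, rfl⟩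
    simp [hφ a b]
  simpa [commute_iff_eq] using congrArg (PresentedGroup.toGroup hrels) (hcomm (.of a) (.of b))

/-- The rack 2-cocycle condition: the homomorphism `C₂ → Q` extending `f` kills the image of
`d₃`. -/
def IsRackCocycle (op : X → X → X) (f : X → X → Q) : Prop :=
  ∀ a b c, f (op a b) c + f a b = f a c + f (op a c) (op b c)

/-- The right translation `(x, t) ↦ (x ◁ b, t + f x b)` of the abelian extension of a rack by a
cocycle `f`. -/
noncomputable def extensionTranslation (hr : IsRackOp op) (f : X → X → Q) (b : X) :
    Equiv.Perm (X × Q) :=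
  Equiv.prodShear (Equiv.ofBijective _ (hr.bij b)) fun x => Equiv.addRight (f x b)

@[simp]
theorem extensionTranslation_apply (hr : IsRackOp op) (f : X → X → Q) (b : X) (y : X × Q) :
    extensionTranslation hr f b y = (op y.1 b, y.2 + f y.1 b) :=
  rfl

theorem extensionTranslation_mul (hr : IsRackOp op) (hf : IsRackCocycle op f) (a b : X) :
    extensionTranslation hr f b * extensionTranslation hr f a =
      extensionTranslation hr f (op a b) * extensionTranslation hr f b := by
  ext1 y
  simp only [Equiv.Perm.mul_apply, extensionTranslation_apply, Prod.mk.injEq]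
  refine ⟨hr.sd _ _ _, ?_⟩
  rw [add_assoc, add_assoc, ← hf y.1 a b, add_comm (f y.1 a)]

theorem extensionTranslation_commute (hr : IsRackOp op) (hf : IsRackCocycle op f)
    (hcomm : ∀ g h : StructureGroup op, g * h = h * g) (a b : X) :
    Commute (extensionTranslation hr f a) (extensionTranslation hr f b) := by
  refine Commute.inv_inv_iff.mp <|
    commute_of_structureGroup_comm hcomm (φ := fun b => (extensionTranslation hr f b)⁻¹) ?_ a b
  intro a b
  rw [← mul_inv_rev, ← mul_inv_rev, extensionTranslation_mul hr hf]

theorem extensionTranslation_op (hr : IsRackOp op) (hf : IsRackCocycle op f)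
    (hcomm : ∀ g h : StructureGroup op, g * h = h * g) (a b : X) :
    extensionTranslation hr f (op a b) = extensionTranslation hr f a :=
  mul_right_cancel <| (extensionTranslation_mul hr hf a b).symm.trans
    (extensionTranslation_commute hr hf hcomm b a)

/-- The translation of `X × Q` by an element of `Q` in the second coordinate. -/
def fiberTranslation (X : Type*) (t : Q) : Equiv.Perm (X × Q) :=
  Equiv.prodCongr (Equiv.refl X) (Equiv.addRight t)

@[simp]
theorem fiberTranslation_apply (t : Q) (y : X × Q) : fiberTranslation X t y = (y.1, y.2 + t) :=
  rfl

/-- The group of permutations of `X × Q` generated by the right translations of the extension and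
the translations of the fibres. -/
def extensionGroup (hr : IsRackOp op) (f : X → X → Q) : Subgroup (Equiv.Perm (X × Q)) :=
  Subgroup.closure (Set.range (extensionTranslation hr f) ∪ Set.range (fiberTranslation X))

theorem extensionGroup_isMulCommutative (hr : IsRackOp op) (hf : IsRackCocycle op f)
    (hcomm : ∀ g h : StructureGroup op, g * h = h * g) :
    IsMulCommutative (extensionGroup hr f) := by
  have hfiber (a : X) (t : Q) : Commute (extensionTranslation hr f a) (fiberTranslation X t) := by
    ext1 y
    simp [add_right_comm]
  apply Subgroup.isMulCommutative_closure
  rintro _ (⟨a, rfl⟩ | ⟨t, rfl⟩) _ (⟨b, rfl⟩ | ⟨u, rfl⟩)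
  · exact extensionTranslation_commute hr hf hcomm a b
  · exact hfiber a u
  · exact (hfiber b t).symm
  · ext1 y
    simp [add_right_comm]

theorem lift_eq_zero_of_lift_single_eq_zero {ι κ' M : Type*} [AddCommGroup M] {κ : ι → κ'}
    {g : ι → M} {z : FreeAbelianGroup ι}
    (hz : FreeAbelianGroup.lift (fun i => Finsupp.single (κ i) (g i)) z = 0) :
    FreeAbelianGroup.lift g z = 0 := by
  have hsum : FreeAbelianGroup.lift g = (Finsupp.liftAddHom fun _ => AddMonoidHom.id M).comp
      (FreeAbelianGroup.lift fun i => Finsupp.single (κ i) (g i)) := by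
    ext i : 1
    simp
  rw [hsum, AddMonoidHom.comp_apply, hz, map_zero]

theorem lift_cocycle_eq_zero_of_addAction {A : Type*} [AddCommGroup A] [AddAction A (X × Q)]
    {translation : X → A} {fiber : Q →+ A}
    (htranslation : ∀ b (y : X × Q), translation b +ᵥ y = (op y.1 b, y.2 + f y.1 b))
    (hfiber : ∀ t (y : X × Q), fiber t +ᵥ y = (y.1, y.2 + t))
    (hconst : ∀ a b, translation (op a b) = translation a)
    {z : FreeAbelianGroup (X × X)} (hz : d2 op z = 0) (hcount : orbitPairCount op z = 0) :
    FreeAbelianGroup.lift (fun p : X × X => f p.1 p.2) z = 0 := by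
  let orb (y : X × Q) : AddAction.orbitRel.Quotient A (X × Q) := Quotient.mk'' y
  let step (p : X × X) : A := translation p.2 - fiber (f p.1 p.2)
  have hstep (p : X × X) : step p +ᵥ (p.1, (0 : Q)) = (op p.1 p.2, 0) := by
    simp [step, sub_eq_neg_add, add_vadd, htranslation, neg_vadd_eq_iff, hfiber]
  have horb (a b : X) : orb (op a b, 0) = orb (a, 0) := Quotient.sound ⟨step (a, b), hstep (a, b)⟩
  let chain : FreeAbelianGroup (X × X) →+ FreeAbelianGroup (A × (X × Q)) :=
    FreeAbelianGroup.map fun p => (step p, (p.1, 0))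
  have hcycle : actionBoundary (chain z) = 0 := by
    have : actionBoundary.comp chain =
        (FreeAbelianGroup.map fun x => ((x, 0) : X × Q)).comp (d2 op) := by
      ext p : 1
      simp [actionBoundary, chain, d2, hstep]
    simpa [hz] using DFunLike.congr_fun this z
  let orbitwise : FreeAbelianGroup (X × X) →+ (AddAction.orbitRel.Quotient A (X × Q) →₀ Q) :=
    FreeAbelianGroup.lift fun p => Finsupp.single (orb (p.1, 0)) (f p.1 p.2)
  have hdisplacement : orbitDisplacement (chain z) =
      -Finsupp.mapRange.addMonoidHom fiber (orbitwise z) := by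
    have : orbitDisplacement.comp chain =
        FreeAbelianGroup.lift (fun p => Finsupp.single (orb (p.1, 0)) (translation p.2)) -
          (Finsupp.mapRange.addMonoidHom fiber).comp orbitwise := by
      ext p : 1
      simp [orbitDisplacement, chain, orbitwise, step, orb]
    rw [← AddMonoidHom.comp_apply, this, AddMonoidHom.sub_apply,
      lift_eq_zero_of_orbitPairCount_eq_zero
        (φ := fun a b => Finsupp.single (orb (a, 0)) (translation b))
        (fun a b c => by rw [horb]) (fun a b c => by rw [hconst]) hcount, zero_sub,
      AddMonoidHom.comp_apply]
  refine lift_eq_zero_of_lift_single_eq_zero (κ := fun p : X × X => orb (p.1, 0)) ?_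
  ext o
  induction o using Quotient.inductionOn' with | h y =>
  have hfix := orbitDisplacement_mem_stabilizer hcycle y
  rw [hdisplacement, Finsupp.neg_apply, neg_mem_iff, AddAction.mem_stabilizer_iff,
    Finsupp.mapRange.addMonoidHom_apply, Finsupp.mapRange_apply, hfiber] at hfix
  simpa using congrArg Prod.snd hfix

open scoped IsMulCommutative in
theorem lift_cocycle_eq_zero (hr : IsRackOp op) (hf : IsRackCocycle op f)
    (hcomm : ∀ g h : StructureGroup op, g * h = h * g)
    {z : FreeAbelianGroup (X × X)} (hz : d2 op z = 0) (hcount : orbitPairCount op z = 0) :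
    FreeAbelianGroup.lift (fun p : X × X => f p.1 p.2) z = 0 := by
  have := extensionGroup_isMulCommutative hr hf hcomm
  let translation (b : X) : Additive (extensionGroup hr f) :=
    .ofMul ⟨extensionTranslation hr f b, Subgroup.subset_closure (.inl ⟨b, rfl⟩)⟩
  let fiber : Q →+ Additive (extensionGroup hr f) :=
    { toFun t := .ofMul ⟨fiberTranslation X t, Subgroup.subset_closure (.inr ⟨t, rfl⟩)⟩
      map_zero' := by
        ext y <;> simp
      map_add' t u := by
        ext y <;> simp [add_right_comm, add_assoc] }
  refine lift_cocycle_eq_zero_of_addAction (translation := translation) (fiber := fiber)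
    (fun _ _ => rfl) (fun _ _ => rfl) (fun a b => ?_) hz hcount
  exact congrArg Additive.ofMul
    (Subtype.ext (extensionTranslation_op hr hf hcomm a b))

end Cocycles

section SecondHomology

variable {op : X → X → X}

theorem isRackCocycle_of_comp_d3_eq_zero {Q : Type*} [AddCommGroup Q]
    {φ : FreeAbelianGroup (X × X) →+ Q} (hφ : φ.comp (d3 op) = 0) :
    IsRackCocycle op fun a b => φ (FreeAbelianGroup.of (a, b)) := by
  intro a b c
  have h := DFunLike.congr_fun hφ (FreeAbelianGroup.of (a, b, c))
  simp only [d3, AddMonoidHom.comp_apply, FreeAbelianGroup.lift_apply_of, map_add, map_sub,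
    AddMonoidHom.zero_apply] at h
  rw [← sub_eq_zero, ← h]
  abel

theorem mem_range_d3 (hr : IsRackOp op) (hcomm : ∀ g h : StructureGroup op, g * h = h * g)
    {z : FreeAbelianGroup (X × X)} (hz : d2 op z = 0) (hcount : orbitPairCount op z = 0) :
    z ∈ (d3 op).range := by
  let mk := QuotientAddGroup.mk' (d3 op).range
  have hmk : mk.comp (d3 op) = 0 := by
    ext t : 1
    exact (QuotientAddGroup.eq_zero_iff _).mpr ⟨_, rfl⟩
  have hlift : FreeAbelianGroup.lift (fun p : X × X => mk (FreeAbelianGroup.of (p.1, p.2))) = mk :=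
    FreeAbelianGroup.lift.apply_symm_apply mk
  have hmkz := lift_cocycle_eq_zero hr (isRackCocycle_of_comp_d3_eq_zero hmk) hcomm hz hcount
  rw [hlift] at hmkz
  exact (QuotientAddGroup.eq_zero_iff z).mp hmkz

/-- The homomorphism `H₂ → ℤ^{(O × O)}` induced by `orbitPairCount`. -/
noncomputable def homologyOrbitPairCount (op : X → X → X) :
    H2 op →+ (Quotient (orbitSetoid op) × Quotient (orbitSetoid op) →₀ ℤ) :=
  QuotientAddGroup.lift _ ((orbitPairCount op).comp (d2 op).ker.subtype) <| by
    rintro z ⟨t, ht⟩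
    rw [AddMonoidHom.mem_ker, AddMonoidHom.comp_apply, ← ht]
    exact DFunLike.congr_fun (orbitPairCount_comp_d3 op) t

theorem homologyOrbitPairCount_injective (hr : IsRackOp op)
    (hcomm : ∀ g h : StructureGroup op, g * h = h * g) :
    Function.Injective (homologyOrbitPairCount op) := by
  rw [injective_iff_map_eq_zero]
  intro x hx
  induction x using QuotientAddGroup.induction_on with | H z =>
  exact (QuotientAddGroup.eq_zero_iff z).mpr (mem_range_d3 hr hcomm z.2 hx)

theorem exists_single_mem_range_homologyOrbitPairCount
    (hper : ∀ a b, a ∈ Function.periodicPts fun x => op x b)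
    (k : Quotient (orbitSetoid op) × Quotient (orbitSetoid op)) :
    ∃ n : ℤ, n ≠ 0 ∧ Finsupp.single k n ∈ (homologyOrbitPairCount op).range := by
  obtain ⟨⟨a⟩, ⟨b⟩⟩ := k
  obtain ⟨n, hn, hperiod⟩ := hper a b
  have horbit (m : ℕ) : orbitOf op ((fun x => op x b)^[m] a) = orbitOf op a := by
    induction m with
    | zero => rfl
    | succ m ih => rw [Function.iterate_succ_apply', orbitOf_op, ih]
  let z := ∑ m ∈ Finset.range n, FreeAbelianGroup.of ((fun x => op x b)^[m] a, b)
  have hz : d2 op z = 0 := by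
    have hstep (m : ℕ) : d2 op (FreeAbelianGroup.of ((fun x => op x b)^[m] a, b)) =
        FreeAbelianGroup.of ((fun x => op x b)^[m + 1] a) -
          FreeAbelianGroup.of ((fun x => op x b)^[m] a) := by
      simp only [d2, FreeAbelianGroup.lift_apply_of, Function.iterate_succ_apply']
    rw [map_sum, Finset.sum_congr rfl fun m _ => hstep m,
      Finset.sum_range_sub fun m => FreeAbelianGroup.of ((fun x => op x b)^[m] a), hperiod.eq,
      Function.iterate_zero_apply, sub_self]
  have hcount : orbitPairCount op z = Finsupp.single (orbitOf op a, orbitOf op b) (n : ℤ) := by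
    simp [z, orbitPairCount, horbit]
  exact ⟨n, mod_cast hn.ne', QuotientAddGroup.mk ⟨z, hz⟩, hcount⟩

end SecondHomology

end RackHomology

theorem H2_torsionFree_of_abelian_structureGroup_general {op : X → X → X} (hr : IsRackOp op)
    (hper : ∀ a b, a ∈ Function.periodicPts fun x => op x b)
    (hcomm : ∀ g h : StructureGroup op, g * h = h * g) :
    Nonempty (H2 op ≃+ (Quotient (orbitSetoid op) × Quotient (orbitSetoid op) →₀ ℤ)) := by
  let φ := (RackHomology.homologyOrbitPairCount op).toIntLinearMap
  have hφ : Function.Injective φ := RackHomology.homologyOrbitPairCount_injective hr hcomm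
  obtain ⟨e⟩ := RackHomology.nonempty_linearEquiv_finsupp_of_single_mem φ.range
    (RackHomology.exists_single_mem_range_homologyOrbitPairCount hper)
  exact ⟨((LinearEquiv.ofInjective φ hφ).trans e).toAddEquiv⟩

/-- A finite quandle with `r` orbits and abelian structure group has
torsion-free second rack homology: `H₂ ≅ ℤ^{r²}`. -/
theorem H2_torsionFree_of_abelian_structureGroup {X : Type*} [Finite X]
    (op : X → X → X) (hq : IsQuandleOp op) (r : ℕ)
    (horb : Nat.card (Quotient (orbitSetoid op)) = r)
    (hcomm : ∀ g h : StructureGroup op, g * h = h * g) :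
    Nonempty (H2 op ≃+ (Fin (r ^ 2) → ℤ)) := by
  obtain ⟨e⟩ := H2_torsionFree_of_abelian_structureGroup_general hq.isRackOp
    (fun a b => (hq.bij b).injective.mem_periodicPts a) hcomm
  have hcard : Nat.card (Quotient (orbitSetoid op) × Quotient (orbitSetoid op)) = r ^ 2 := by
    rw [Nat.card_prod, horb, sq]
  exact ⟨e.trans <| (Finsupp.domCongr (Finite.equivFinOfCardEq hcard)).trans
    (Finsupp.linearEquivFunOnFinite ℤ ℤ (Fin (r ^ 2))).toAddEquiv⟩
end

section
/- Let m,n ≥ 1 be integers. The second rack homology group of the quandle U_{m,n} is H_2(U_{m,n}) ≅ ℤ⁴ × (ℤ/gcd(m,n))². -/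
/-!
Homomorphisms out of `C₂ / im d₃` are rack 2-cocycles, so `H₂` is known once a 2-cocycle is found
from which all others arise by changing coefficients and adding coboundaries.

Let `e` be a 2-cocycle on `U_{m,n}` and `i ≠ j` its two summands. The cocycle condition makes the
increments `e(a + 1, c) - e(a, c)` for `a, c` in `i`, and `e(a, b + 1) - e(a, b)` for `a` in `i` and
`b` in `j`, equal to one constant `δᵢ`. Going once around either cycle gives `m δᵢ = n δᵢ = 0`,
hence `gcd(m,n) δᵢ = 0`. What remains of `e` on pairs starting in `i` is the value on the diagonal
and a function `f` on a single cycle, which is a coboundary up to its total `∑ f`. Thus each summand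
contributes two free parameters and one that is killed by `gcd(m,n)`.
-/

variable {X : Type*}

/-- The quandle `U_{n_1,…,n_r}` on `ℤ/n_1 ⊔ ⋯ ⊔ ℤ/n_r`: `a ◁ b = a` if `a, b` lie in
the same summand and `a ◁ b = a + 1` otherwise. -/
def Uop {r : ℕ} (n : Fin r → ℕ) :
    (Σ i, ZMod (n i)) → (Σ i, ZMod (n i)) → (Σ i, ZMod (n i)) :=
  fun a b => if a.1 = b.1 then a else ⟨a.1, a.2 + 1⟩

section RackCocycles

open FreeAbelianGroup (of lift lift_ext)

universe u

variable {X : Type u} {op : X → X → X} {A Q : Type*} [AddCommGroup A] [AddCommGroup Q]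

/-- Rack 2-cocycles with values in `Q`, i.e. the functions on `X²` whose linear extension kills the
boundaries `d₃(a,b,c)`. The four terms are arranged so that no subtraction occurs. -/
def IsTwoCocycle (op : X → X → X) (e : X → X → Q) : Prop :=
  ∀ a b c, e (op a b) c + e a b = e a c + e (op a c) (op b c)

/-- A 2-cocycle is universal up to coboundaries if every other one is, up to the coboundary of a
function on `X`, obtained from it by a homomorphism of the coefficients. The coefficient groups
range over the universe of `X`, which contains `C₂ / im d₃`. -/
def IsUniversalTwoCocycle (op : X → X → X) (φ : X → X → A) : Prop :=
  IsTwoCocycle op φ ∧ ∀ ⦃Q : Type u⦄ [AddCommGroup Q] (e : X → X → Q), IsTwoCocycle op e →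
    ∃ (ψ : A →+ Q) (h : X → Q), ∀ x y, e x y = ψ (φ x y) + (h (op x y) - h x)

lemma d2_of (a b : X) : d2 op (of (a, b)) = of (op a b) - of a := by
  simp [d2]

lemma isTwoCocycle_iff_comp_d3_eq_zero (π : FreeAbelianGroup (X × X) →+ Q) :
    IsTwoCocycle op (fun a b => π (of (a, b))) ↔ π.comp (d3 op) = 0 := by
  have apply_of (a b c : X) : π.comp (d3 op) (of (a, b, c)) =
      π (of (op a b, c)) + π (of (a, b)) - (π (of (a, c)) + π (of (op a c, op b c))) := by
    simp only [AddMonoidHom.comp_apply, d3, FreeAbelianGroup.lift_apply_of, map_add, map_sub]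
    abel
  refine ⟨fun he => lift_ext _ _ fun ⟨a, b, c⟩ => ?_, fun h a b c => ?_⟩
  · rw [apply_of, he a b c, sub_self, AddMonoidHom.zero_apply]
  · rw [← sub_eq_zero, ← apply_of, h, AddMonoidHom.zero_apply]

lemma IsTwoCocycle.lift_comp_d3 {e : X → X → Q} (he : IsTwoCocycle op e) :
    (lift (Function.uncurry e)).comp (d3 op) = 0 :=
  (isTwoCocycle_iff_comp_d3_eq_zero _).1 <| by simpa using he

lemma IsTwoCocycle.piSingle {ι : Type*} [DecidableEq ι] {c : X → ι}
    (hc : ∀ a b, c (op a b) = c a) {e : X → X → A} (he : IsTwoCocycle op e) :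
    IsTwoCocycle op fun a b => (Pi.single (c a) (e a b) : ι → A) := by
  intro x y z
  simp only [hc, ← Pi.single_add, he x y z]

/-- Testing universality against the cocycle `C₂ → C₂ / im d₃` shows that cycles killed by `φ`
are boundaries. -/
lemma IsUniversalTwoCocycle.mem_range_d3 {φ : X → X → A} (hφ : IsUniversalTwoCocycle op φ)
    {x : FreeAbelianGroup (X × X)} (hx : d2 op x = 0) (hφx : lift (Function.uncurry φ) x = 0) :
    x ∈ (d3 op).range := by
  let π := QuotientAddGroup.mk' (d3 op).range
  have π_comp : π.comp (d3 op) = 0 := by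
    ext y
    simp [π]
  obtain ⟨ψ, h, hψ⟩ := hφ.2 _ ((isTwoCocycle_iff_comp_d3_eq_zero π).2 π_comp)
  have π_eq : π = ψ.comp (lift (Function.uncurry φ)) + (lift h).comp (d2 op) :=
    lift_ext _ _ fun ⟨a, b⟩ => by simp [hψ, d2_of]
  have πx : π x = 0 := by simp [π_eq, hx, hφx]
  rwa [← AddMonoidHom.mem_ker, QuotientAddGroup.ker_mk'] at πx

/-- The isomorphism induced on `H₂` by a universal 2-cocycle. -/
noncomputable def IsUniversalTwoCocycle.H2AddEquiv {φ : X → X → A}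
    (hφ : IsUniversalTwoCocycle op φ)
    (hsurj : (d2 op).ker.map (lift (Function.uncurry φ)) = ⊤) : H2 op ≃+ A :=
  let Φ := (lift (Function.uncurry φ)).comp (d2 op).ker.subtype
  have boundaries_eq_ker : (d3 op).range.addSubgroupOf (d2 op).ker = Φ.ker := by
    ext ⟨x, hx⟩
    rw [AddSubgroup.mem_addSubgroupOf, AddMonoidHom.mem_ker]
    refine ⟨?_, hφ.mem_range_d3 hx⟩
    rintro ⟨y, rfl⟩
    exact DFunLike.congr_fun hφ.1.lift_comp_d3 y
  have Φ_surjective : Function.Surjective Φ := by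
    rw [← AddMonoidHom.range_eq_top, AddMonoidHom.range_comp, AddSubgroup.range_subtype, hsurj]
  (QuotientAddGroup.quotientAddEquivOfEq boundaries_eq_ker).trans
    (QuotientAddGroup.quotientKerEquivOfSurjective Φ Φ_surjective)

end RackCocycles

section ZModFunctions

variable {n : ℕ} {M : Type*}

lemma apply_eq_apply_zero_add_of_map_add_one [AddCommGroup M] (f : ZMod n → M) (χ : ZMod n →+ M)
    (hf : ∀ a, f (a + 1) = f a + χ 1) (a : ZMod n) : f a = f 0 + χ a := by
  obtain ⟨k, rfl⟩ := ZMod.intCast_surjective a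
  let F : AddConstMap (ZMod n) M 1 (χ 1) := ⟨f, hf⟩
  simpa only [← map_zsmul, zsmul_one] using! AddConstMapClass.map_zsmul_const F k

lemma nsmul_eq_zero_of_map_add_one [AddCommGroup M] (f : ZMod n → M) {d : M}
    (hf : ∀ a, f (a + 1) = f a + d) : n • d = 0 := by
  let F : AddConstMap (ZMod n) M 1 d := ⟨f, hf⟩
  simpa using AddConstMapClass.map_nsmul_const F n

lemma zmod_val_add_one_of_ne_neg_one [NeZero n] {a : ZMod n} (ha : a ≠ -1) :
    (a + 1).val = a.val + 1 := by
  have val_ne : a.val + 1 ≠ n := fun h =>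
    ha <| eq_neg_of_add_eq_zero_left <| by simpa using congr_arg (Nat.cast : ℕ → ZMod n) h
  simpa using ZMod.val_natCast_of_lt (lt_of_le_of_ne a.val_lt val_ne)

lemma exists_zmod_addMonoidHom_apply_one [AddCommGroup M] {d : M} (hd : n • d = 0) :
    ∃ χ : ZMod n →+ M, χ 1 = d := by
  refine ⟨ZMod.lift n ⟨zmultiplesHom M d, by simpa using hd⟩, ?_⟩
  simpa using ZMod.lift_coe n ⟨zmultiplesHom M d, by simpa using hd⟩ 1

/-- The sum of `f` over the residues preceding `a` in the order `0, 1, …, n - 1`. It is a discrete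
antiderivative of `f`, except for the jump by `∑ b, f b` between `-1` and `0`. -/
def partialSum [AddCommMonoid M] [NeZero n] (f : ZMod n → M) (a : ZMod n) : M :=
  ∑ b with b.val < a.val, f b

lemma partialSum_add_one [AddCommMonoid M] [NeZero n] (f : ZMod n → M) (a : ZMod n) :
    partialSum f a + f a = partialSum f (a + 1) + if a = -1 then ∑ b, f b else 0 := by
  have sum_le : partialSum f a + f a = ∑ b with b.val ≤ a.val, f b := by
    have filter_le : ({b | b.val ≤ a.val} : Finset (ZMod n)) =
        insert a ({b | b.val < a.val} : Finset (ZMod n)) := by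
      ext b
      simp [le_iff_eq_or_lt, (ZMod.val_injective n).eq_iff]
    rw [filter_le, Finset.sum_insert (by simp), add_comm, partialSum]
  rw [sum_le]
  split_ifs with ha
  · subst ha
    have val_le (b : ZMod n) : b.val ≤ (-1 : ZMod n).val := by
      obtain ⟨m, rfl⟩ := Nat.exists_eq_succ_of_ne_zero (NeZero.ne n)
      rw [ZMod.val_neg_one]
      exact Nat.le_of_lt_succ b.val_lt
    simp [partialSum, val_le]
  · simp [partialSum, zmod_val_add_one_of_ne_neg_one ha]

end ZModFunctions

section CocyclesOfUop

variable {r : ℕ} {N : Fin r → ℕ} {i j : Fin r}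

lemma Uop_same (a b : ZMod (N i)) : Uop N ⟨i, a⟩ ⟨i, b⟩ = ⟨i, a⟩ := by
  simp [Uop]

lemma Uop_of_ne (hij : i ≠ j) (a : ZMod (N i)) (b : ZMod (N j)) :
    Uop N ⟨i, a⟩ ⟨j, b⟩ = ⟨i, a + 1⟩ := by
  simp [Uop, hij]

lemma Uop_fst (x y : Σ i, ZMod (N i)) : (Uop N x y).1 = x.1 := by
  unfold Uop
  split_ifs <;> rfl

namespace IsTwoCocycle

variable {Q : Type*} [AddCommGroup Q] {e : (Σ i, ZMod (N i)) → (Σ i, ZMod (N i)) → Q}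

/-- The increment of a 2-cocycle on `U_N` under a unit shift of its first argument inside the
summand `i`; by cocyclicity it does not depend on where the shift takes place. -/
def shift (e : (Σ i, ZMod (N i)) → (Σ i, ZMod (N i)) → Q) (i : Fin r) : Q :=
  e ⟨i, 1⟩ ⟨i, 0⟩ - e ⟨i, 0⟩ ⟨i, 0⟩

lemma apply_add_one_add_one (he : IsTwoCocycle (Uop N) e) (hij : i ≠ j) (a b : ZMod (N i)) :
    e ⟨i, a + 1⟩ ⟨i, b + 1⟩ = e ⟨i, a⟩ ⟨i, b⟩ := by
  have := he ⟨i, a⟩ ⟨i, b⟩ ⟨j, 0⟩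
  rw [Uop_same, Uop_of_ne hij, Uop_of_ne hij] at this
  exact (add_left_cancel this).symm

lemma apply_diag (he : IsTwoCocycle (Uop N) e) (hij : i ≠ j) (a : ZMod (N i)) :
    e ⟨i, a⟩ ⟨i, a⟩ = e ⟨i, 0⟩ ⟨i, 0⟩ := by
  simpa using apply_eq_apply_zero_add_of_map_add_one (fun a => e ⟨i, a⟩ ⟨i, a⟩) 0
    (fun a => by simpa using he.apply_add_one_add_one hij a a) a

lemma sub_left_eq_sub_right (he : IsTwoCocycle (Uop N) e) (hij : i ≠ j)
    (a c : ZMod (N i)) (b : ZMod (N j)) :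
    e ⟨i, a + 1⟩ ⟨i, c⟩ - e ⟨i, a⟩ ⟨i, c⟩ = e ⟨i, a⟩ ⟨j, b + 1⟩ - e ⟨i, a⟩ ⟨j, b⟩ := by
  have := he ⟨i, a⟩ ⟨j, b⟩ ⟨i, c⟩
  rw [Uop_same, Uop_of_ne hij, Uop_of_ne hij.symm] at this
  rw [sub_eq_sub_iff_add_eq_add, this, add_comm]

lemma apply_add_one_left (he : IsTwoCocycle (Uop N) e) (hij : i ≠ j) (a c : ZMod (N i)) :
    e ⟨i, a + 1⟩ ⟨i, c⟩ = e ⟨i, a⟩ ⟨i, c⟩ + shift e i := by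
  let D (a c : ZMod (N i)) : Q := e ⟨i, a + 1⟩ ⟨i, c⟩ - e ⟨i, a⟩ ⟨i, c⟩
  have D_eq_right (a c c' : ZMod (N i)) : D a c = D a c' :=
    (he.sub_left_eq_sub_right hij a c 0).trans
      (he.sub_left_eq_sub_right hij a c' 0).symm
  have D_add_one (a c : ZMod (N i)) : D (a + 1) c = D a c := by
    rw [D_eq_right _ c (c + 1)]
    exact congr_arg₂ (· - ·) (he.apply_add_one_add_one hij _ _) (he.apply_add_one_add_one hij _ _)
  have D_eq_shift : D a c = shift e i := by
    have D_const := apply_eq_apply_zero_add_of_map_add_one (fun a => D a c) 0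
      (by simpa using fun a => D_add_one a c) a
    simpa [D, shift, D_eq_right 0 c 0] using D_const
  rw [← D_eq_shift, add_sub_cancel]

lemma apply_add_one_right (he : IsTwoCocycle (Uop N) e) (hij : i ≠ j) (a : ZMod (N i))
    (b : ZMod (N j)) : e ⟨i, a⟩ ⟨j, b + 1⟩ = e ⟨i, a⟩ ⟨j, b⟩ + shift e i := by
  rw [← sub_eq_iff_eq_add', ← he.sub_left_eq_sub_right hij a 0 b,
    he.apply_add_one_left hij, add_sub_cancel_left]

lemma gcd_nsmul_shift (he : IsTwoCocycle (Uop N) e) (hij : i ≠ j) :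
    (N i).gcd (N j) • shift e i = 0 := by
  rw [← addOrderOf_dvd_iff_nsmul_eq_zero, Nat.dvd_gcd_iff, addOrderOf_dvd_iff_nsmul_eq_zero,
    addOrderOf_dvd_iff_nsmul_eq_zero]
  exact ⟨nsmul_eq_zero_of_map_add_one (e ⟨i, ·⟩ ⟨i, 0⟩) (he.apply_add_one_left hij · 0),
    nsmul_eq_zero_of_map_add_one (e ⟨i, 0⟩ ⟨j, ·⟩) (he.apply_add_one_right hij 0)⟩

lemma apply_same (he : IsTwoCocycle (Uop N) e) (hij : i ≠ j) {χ : ZMod (N i) →+ Q}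
    (hχ : χ 1 = shift e i) (a b : ZMod (N i)) :
    e ⟨i, a⟩ ⟨i, b⟩ = e ⟨i, 0⟩ ⟨i, 0⟩ + χ (a - b) := by
  have apply_left : ∀ a, e ⟨i, a⟩ ⟨i, b⟩ = e ⟨i, 0⟩ ⟨i, b⟩ + χ a :=
    apply_eq_apply_zero_add_of_map_add_one (e ⟨i, ·⟩ ⟨i, b⟩) χ
      (hχ ▸ he.apply_add_one_left hij · b)
  rw [← he.apply_diag hij b, apply_left a, apply_left b, map_sub]
  abel

lemma apply_of_ne (he : IsTwoCocycle (Uop N) e) (hij : i ≠ j) {χ : ZMod (N j) →+ Q}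
    (hχ : χ 1 = shift e i) (a : ZMod (N i)) (b : ZMod (N j)) :
    e ⟨i, a⟩ ⟨j, b⟩ = e ⟨i, a⟩ ⟨j, 0⟩ + χ b :=
  apply_eq_apply_zero_add_of_map_add_one (e ⟨i, a⟩ ⟨j, ·⟩) χ
    (hχ ▸ he.apply_add_one_right hij a) b

end IsTwoCocycle

end CocyclesOfUop

section ClassifyingCocycle

variable {N : Fin 2 → ℕ} {g : ℕ}

lemma fin_two_ne_add_one (i : Fin 2) : i ≠ i + 1 := by
  omega

lemma fin_two_eq_add_one_of_ne {i j : Fin 2} (hij : i ≠ j) : j = i + 1 := by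
  omega

/-- The contribution of a pair `(x, y)` to the invariants of a 2-cycle attached to the summand of
`x`: the number of pairs inside that summand, the number of times the shifts of `x` by the other
summand pass from `-1` to `0`, and a torsion part. -/
def localInvariant (N : Fin 2 → ℕ) (g : ℕ) (x y : Σ i, ZMod (N i)) : ℤ × ℤ × ZMod g :=
  if x.1 = y.1 then (1, 0, x.2.cast - y.2.cast)
  else (0, if x.2 = -1 then 1 else 0, y.2.cast)

/-- The 2-cocycle on `U_{m,n}` collecting the invariants of both summands; for `g = gcd(m, n)` it
induces the isomorphism from `H₂`. -/
def classifyingCocycle (N : Fin 2 → ℕ) (g : ℕ) (x y : Σ i, ZMod (N i)) :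
    Fin 2 → ℤ × ℤ × ZMod g :=
  Pi.single x.1 (localInvariant N g x y)

lemma localInvariant_same {i : Fin 2} (a b : ZMod (N i)) :
    localInvariant N g ⟨i, a⟩ ⟨i, b⟩ = (1, 0, a.cast - b.cast) := by
  simp [localInvariant]

lemma localInvariant_of_ne {i j : Fin 2} (hij : i ≠ j) (a : ZMod (N i)) (b : ZMod (N j)) :
    localInvariant N g ⟨i, a⟩ ⟨j, b⟩ = (0, if a = -1 then 1 else 0, b.cast) := by
  simp [localInvariant, hij]

lemma isTwoCocycle_localInvariant (hg : ∀ i, g ∣ N i) :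
    IsTwoCocycle (Uop N) (localInvariant N g) := by
  rintro ⟨i, a⟩ ⟨j, b⟩ ⟨k, c⟩
  obtain rfl | hij := eq_or_ne i j <;> obtain rfl | hik := eq_or_ne i k
  · simp only [Uop_same, add_comm]
  · simp [Uop_same, Uop_of_ne hik, localInvariant_same, localInvariant_of_ne hik,
      ZMod.cast_add (hg i), ZMod.cast_one (hg i)]
  · rw [Uop_same, Uop_of_ne hij, Uop_of_ne hij.symm]
    simp only [localInvariant_same, localInvariant_of_ne hij, ZMod.cast_add (hg _),
      ZMod.cast_one (hg _), Prod.mk_add_mk, Prod.mk.injEq]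
    exact ⟨trivial, by simp, by ring⟩
  · obtain rfl := (fin_two_eq_add_one_of_ne hij).trans (fin_two_eq_add_one_of_ne hik).symm
    simp [Uop_same, Uop_of_ne hij, localInvariant_of_ne hij, add_comm]

lemma IsTwoCocycle.exists_eq_localInvariant [∀ i, NeZero (N i)] {Q : Type*} [AddCommGroup Q]
    {e : (Σ i, ZMod (N i)) → (Σ i, ZMod (N i)) → Q} (he : IsTwoCocycle (Uop N) e)
    (hg : ∀ i, g ∣ N i) (hshift : ∀ i, g • shift e i = 0) :
    ∃ (θ : Fin 2 → ℤ × ℤ × ZMod g →+ Q) (h : (Σ i, ZMod (N i)) → Q),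
      ∀ x y, e x y = θ x.1 (localInvariant N g x y) + (h (Uop N x y) - h x) := by
  choose χ χ_one using fun i => exists_zmod_addMonoidHom_apply_one (hshift i)
  let χ_cast (i j : Fin 2) : ZMod (N j) →+ Q := (χ i).comp (ZMod.castHom (hg j) (ZMod g))
  have χ_cast_one (i j : Fin 2) : χ_cast i j 1 = shift e i := by
    rw [← χ_one i]
    exact congr_arg (χ i) (map_one (ZMod.castHom (hg j) (ZMod g)))
  let f (i : Fin 2) (a : ZMod (N i)) : Q := e ⟨i, a⟩ ⟨i + 1, 0⟩
  let θ (i : Fin 2) : ℤ × ℤ × ZMod g →+ Q :=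
    (zmultiplesHom Q (e ⟨i, 0⟩ ⟨i, 0⟩)).coprod ((zmultiplesHom Q (∑ a, f i a)).coprod (χ i))
  refine ⟨θ, fun x => partialSum (f x.1) x.2, ?_⟩
  rintro ⟨i, a⟩ ⟨j, b⟩
  obtain rfl | hij := eq_or_ne i j
  · rw [he.apply_same (fin_two_ne_add_one i) (χ_cast_one i i), Uop_same, localInvariant_same]
    simp [θ, χ_cast, ZMod.cast_sub (hg i)]
  · obtain rfl := fin_two_eq_add_one_of_ne hij
    rw [Uop_of_ne hij, localInvariant_of_ne hij]
    let ε : ℤ := if a = -1 then 1 else 0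
    have f_eq : f i a = ε • ∑ a, f i a + (partialSum (f i) (a + 1) - partialSum (f i) a) := by
      rw [ite_zero_smul, one_zsmul, ← add_sub_assoc, eq_sub_iff_add_eq', partialSum_add_one,
        add_comm]
    calc e ⟨i, a⟩ ⟨i + 1, b⟩
      _ = f i a + χ i b.cast := he.apply_of_ne hij (χ_cast_one i (i + 1)) a b
      _ = ε • ∑ a, f i a + χ i b.cast + (partialSum (f i) (a + 1) - partialSum (f i) a) := by
        rw [f_eq, add_right_comm]
      _ = θ i (0, ε, b.cast) + (partialSum (f i) (a + 1) - partialSum (f i) a) := by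
        simp [θ]

lemma isUniversalTwoCocycle_classifyingCocycle [∀ i, NeZero (N i)] :
    IsUniversalTwoCocycle (Uop N) (classifyingCocycle N ((N 0).gcd (N 1))) := by
  have hg : ∀ i, (N 0).gcd (N 1) ∣ N i :=
    Fin.forall_fin_two.2 ⟨Nat.gcd_dvd_left _ _, Nat.gcd_dvd_right _ _⟩
  refine ⟨(isTwoCocycle_localInvariant hg).piSingle Uop_fst, fun Q _ e he => ?_⟩
  obtain ⟨θ, h, hθ⟩ := he.exists_eq_localInvariant hg <| Fin.forall_fin_two.2
    ⟨he.gcd_nsmul_shift zero_ne_one, Nat.gcd_comm (N 0) (N 1) ▸ he.gcd_nsmul_shift one_ne_zero⟩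
  let ψ := LinearMap.lsum ℤ (fun _ => _) ℤ fun i => (θ i).toIntLinearMap
  have ψ_single (i : Fin 2) (w : ℤ × ℤ × ZMod ((N 0).gcd (N 1))) : ψ (Pi.single i w) = θ i w :=
    LinearMap.lsum_piSingle ..
  refine ⟨ψ.toAddMonoidHom, h, fun x y => ?_⟩
  rw [hθ, LinearMap.toAddMonoidHom_coe, classifyingCocycle, ψ_single]

lemma eq_top_of_single_mem {ι : Type*} [Finite ι] [DecidableEq ι]
    {K : AddSubgroup (ι → ℤ × ℤ × ZMod g)}
    (h₁ : ∀ i, (Pi.single i (1, 0, 0) : ι → ℤ × ℤ × ZMod g) ∈ K)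
    (h₂ : ∀ i, (Pi.single i (0, 1, 0) : ι → ℤ × ℤ × ZMod g) ∈ K)
    (h₃ : ∀ i, (Pi.single i (0, 0, 1) : ι → ℤ × ℤ × ZMod g) ∈ K) : K = ⊤ := by
  cases nonempty_fintype ι
  refine (AddSubgroup.eq_top_iff' K).2 fun v => ?_
  rw [← Finset.univ_sum_single v]
  refine sum_mem fun i _ => ?_
  obtain ⟨p, q, z⟩ := v i
  obtain ⟨s, rfl⟩ := ZMod.intCast_surjective z
  have single_eq : (Pi.single i (p, q, (s : ZMod g)) : ι → ℤ × ℤ × ZMod g) =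
      p • Pi.single i (1, 0, 0) + q • Pi.single i (0, 1, 0) + s • Pi.single i (0, 0, 1) := by
    simp [← Pi.single_smul, ← Pi.single_add]
  rw [single_eq]
  exact add_mem (add_mem (zsmul_mem (h₁ i) p) (zsmul_mem (h₂ i) q)) (zsmul_mem (h₃ i) s)

open FreeAbelianGroup in
lemma map_ker_d2_classifyingCocycle [∀ i, NeZero (N i)] (hg : ∀ i, g ∣ N i) :
    (d2 (Uop N)).ker.map (lift (Function.uncurry (classifyingCocycle N g))) = ⊤ := by
  set K := (d2 (Uop N)).ker.map (lift (Function.uncurry (classifyingCocycle N g)))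
  have diagonal_mem (i : Fin 2) : Pi.single i (1, 0, 0) ∈ K :=
    ⟨of (⟨i, 0⟩, ⟨i, 0⟩), by simp [d2_of, Uop_same],
      by simp [classifyingCocycle, localInvariant_same]⟩
  have orbit_mem (i : Fin 2) : Pi.single i (0, 1, 0) ∈ K := by
    refine ⟨∑ a : ZMod (N i), of (⟨i, a⟩, ⟨i + 1, 0⟩), ?_, ?_⟩
    · have sum_shift : ∑ a : ZMod (N i), of (⟨i, a + 1⟩ : Σ i, ZMod (N i)) = ∑ a, of ⟨i, a⟩ :=
        Equiv.sum_comp (Equiv.addRight 1) fun a : ZMod (N i) => of (⟨i, a⟩ : Σ i, ZMod (N i))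
      simp [d2_of, Uop_of_ne (fin_two_ne_add_one i), sum_shift]
    · simp only [classifyingCocycle, localInvariant_of_ne (fin_two_ne_add_one i), map_sum,
        lift_apply_of, Function.uncurry_apply_pair, ZMod.cast_zero]
      rw [Finset.sum_eq_single (-1) (fun a _ ha => by simp [ha]) (by simp), if_pos rfl]
  have difference_mem (i : Fin 2) : Pi.single i (0, 0, 1) ∈ K := by
    refine ⟨of (⟨i, 0⟩, ⟨i + 1, 1⟩) - of (⟨i, 0⟩, ⟨i + 1, 0⟩), ?_, ?_⟩
    · simp [d2_of, Uop_of_ne (fin_two_ne_add_one i)]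
    · simp [classifyingCocycle, localInvariant_of_ne (fin_two_ne_add_one i), ← Pi.single_sub,
        ZMod.cast_one (hg _)]
  exact eq_top_of_single_mem diagonal_mem orbit_mem difference_mem

end ClassifyingCocycle

/-- The regrouping of coordinates `((a, b, c), (x, y, z)) ↦ ((a, b, x, y), (c, z))`. -/
def finTwoProdAddEquiv (A B : Type*) [Add A] [Add B] :
    (Fin 2 → A × A × B) ≃+ (Fin 4 → A) × (B × B) where
  toFun v := (![(v 0).1, (v 0).2.1, (v 1).1, (v 1).2.1], ((v 0).2.2, (v 1).2.2))
  invFun w := ![(w.1 0, w.1 1, w.2.1), (w.1 2, w.1 3, w.2.2)]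
  left_inv v := by ext i <;> fin_cases i <;> rfl
  right_inv w := by
    ext i
    · fin_cases i <;> rfl
    all_goals rfl
  map_add' v w := by
    ext i
    · fin_cases i <;> rfl
    all_goals rfl

/-- `H₂(U_{m,n}) ≅ ℤ⁴ × (ℤ/gcd(m,n))²`. -/
theorem H2_Umn (m n : ℕ) (hm : 1 ≤ m) (hn : 1 ≤ n) :
    Nonempty (H2 (Uop ![m, n]) ≃+
      (Fin 4 → ℤ) × (ZMod (Nat.gcd m n) × ZMod (Nat.gcd m n))) := by
  have : ∀ i, NeZero (![m, n] i) :=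
    Fin.forall_fin_two.2 ⟨⟨Nat.one_le_iff_ne_zero.1 hm⟩, ⟨Nat.one_le_iff_ne_zero.1 hn⟩⟩
  have gcd_dvd : ∀ i, m.gcd n ∣ ![m, n] i :=
    Fin.forall_fin_two.2 ⟨Nat.gcd_dvd_left m n, Nat.gcd_dvd_right m n⟩
  have universal : IsUniversalTwoCocycle (Uop ![m, n]) (classifyingCocycle ![m, n] (m.gcd n)) :=
    isUniversalTwoCocycle_classifyingCocycle
  exact ⟨(universal.H2AddEquiv (map_ker_d2_classifyingCocycle gcd_dvd)).trans
    (finTwoProdAddEquiv ℤ (ZMod (m.gcd n)))⟩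
end
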